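/- Let a > 0 and b > 0 be real constants and let μ₁ denote the exponential probability distribution on (0, ∞) with rate parameter 1. Then the integral (taken in [0, ∞], i.e. both sides may be infinite) of the function c ↦ a / ln(1 + b·c) with respect to μ₁ equals (a/b) · ∫₀^∞ exp( a/t + (1 − exp(a/t))/b ) · (1/t) dt. (With a = S·ln 2 / W and b = P_j·N⁻²·(d_j^{IA})^{−l}, this is the paper's formula E[I_j^T] for the expected time to transmit a packet of size S from the j-th IoT device to the edge server over a Rayleigh-fading channel.) -/

import Mathlib

/-!
The formula is the change of variables `c = (exp (a / t) - 1) / b`, a decreasing bijection of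
`(0, ∞)` onto itself whose inverse is the transmission time `t = a / log (1 + b * c)`. Under it the
integrand becomes `t`, the density `exp (-c)` becomes `exp ((1 - exp (a / t)) / b)`, and the
absolute Jacobian is `a / (b * t ^ 2) * exp (a / t)`. Since everything is nonnegative, the
`[0, ∞]`-valued change of variables formula applies and no integrability has to be checked.
-/

/-- The channel gain for which the transmission time equals `t`. -/
noncomputable def gainOfTime (a b t : ℝ) : ℝ := (Real.exp (a / t) - 1) / b

lemma time_gainOfTime {a b t : ℝ} (ha : 0 < a) (hb : 0 < b) :
    a / Real.log (1 + b * gainOfTime a b t) = t := by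
  have h : 1 + b * gainOfTime a b t = Real.exp (a / t) := by
    rw [gainOfTime]; field_simp; ring
  rw [h, Real.log_exp, div_div_cancel₀ ha.ne']

lemma injective_gainOfTime {a b : ℝ} (ha : 0 < a) (hb : 0 < b) :
    Function.Injective (gainOfTime a b) := fun s t h => by
  rw [← time_gainOfTime (t := s) ha hb, h, time_gainOfTime ha hb]

lemma image_gainOfTime {a b : ℝ} (ha : 0 < a) (hb : 0 < b) :
    gainOfTime a b '' Set.Ioi 0 = Set.Ioi 0 := by
  ext c
  constructor
  · rintro ⟨t, ht, rfl⟩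
    have : 1 < Real.exp (a / t) := Real.one_lt_exp_iff.2 (div_pos ha ht)
    exact div_pos (by linarith) hb
  · intro (hc : 0 < c)
    have h1 : 1 < 1 + b * c := by nlinarith [mul_pos hb hc]
    refine ⟨a / Real.log (1 + b * c), div_pos ha (Real.log_pos h1), ?_⟩
    rw [gainOfTime, div_div_cancel₀ ha.ne', Real.exp_log (by linarith)]
    field_simp
    ring

lemma hasDerivAt_gainOfTime {a b t : ℝ} (ht : t ≠ 0) :
    HasDerivAt (gainOfTime a b) (-(a / (b * t ^ 2) * Real.exp (a / t))) t := by
  have h := ((((hasDerivAt_inv ht).const_mul a).exp).sub_const 1).div_const b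
  refine HasDerivAt.congr_deriv (f := gainOfTime a b) h ?_
  rw [← div_eq_mul_inv a t]
  field_simp

open MeasureTheory ProbabilityTheory Real

/-- The point `0` contributes nothing because of the convention `a / log 1 = a / 0 = 0`; it is a
null set in any case. -/
lemma lintegral_time_expMeasure (a b : ℝ) :
    ∫⁻ c, ENNReal.ofReal (a / Real.log (1 + b * c)) ∂(expMeasure 1) =
      ∫⁻ c in Set.Ioi (0 : ℝ),
        ENNReal.ofReal (Real.exp (-c)) * ENNReal.ofReal (a / Real.log (1 + b * c)) := by
  have hm : Measurable (exponentialPDF 1) :=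
    (measurable_exponentialPDFReal 1).ennreal_ofReal
  change ∫⁻ c, _ ∂(volume.withDensity (exponentialPDF 1)) = _
  rw [lintegral_withDensity_eq_lintegral_mul _ hm (by fun_prop),
    ← lintegral_indicator measurableSet_Ioi]
  refine lintegral_congr fun c => ?_
  simp only [Pi.mul_apply]
  rcases lt_trichotomy c 0 with hc | rfl | hc
  · rw [exponentialPDF_of_neg hc, zero_mul, Set.indicator_of_notMem (by simp [hc.le])]
  · simp
  · rw [exponentialPDF_of_nonneg hc.le, Set.indicator_of_mem (Set.mem_Ioi.2 hc), one_mul, one_mul]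

/-- For `a, b > 0` and `μ₁` the exponential distribution with rate 1,
the `[0,∞]`-valued integral of `c ↦ a / ln(1 + b·c)` with respect to `μ₁` equals
`(a/b) · ∫₀^∞ exp(a/t + (1 − exp(a/t))/b) · (1/t) dt`. -/
theorem expected_transmission_time_IoT_to_edge (a b : ℝ) (ha : 0 < a) (hb : 0 < b) :
    ∫⁻ c, ENNReal.ofReal (a / Real.log (1 + b * c)) ∂(expMeasure 1) =
      ENNReal.ofReal (a / b) *
        ∫⁻ t in Set.Ioi (0 : ℝ),
          ENNReal.ofReal (Real.exp (a / t + (1 - Real.exp (a / t)) / b) * (1 / t)) := by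
  rw [lintegral_time_expMeasure]
  conv_lhs => rw [← image_gainOfTime ha hb]
  rw [lintegral_image_eq_lintegral_abs_deriv_mul measurableSet_Ioi
      (fun t (ht : 0 < t) => (hasDerivAt_gainOfTime ht.ne').hasDerivWithinAt)
      (injective_gainOfTime ha hb).injOn,
    ← lintegral_const_mul' _ _ ENNReal.ofReal_ne_top]
  refine setLIntegral_congr_fun measurableSet_Ioi fun t (ht : 0 < t) => ?_
  have hpos : 0 < a / (b * t ^ 2) * Real.exp (a / t) := by positivity
  have hneg : -gainOfTime a b t = (1 - Real.exp (a / t)) / b := by rw [gainOfTime]; ring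
  simp only [time_gainOfTime ha hb, abs_neg, abs_of_pos hpos, hneg]
  rw [← ENNReal.ofReal_mul (Real.exp_pos _).le, ← ENNReal.ofReal_mul hpos.le,
    ← ENNReal.ofReal_mul (div_pos ha hb).le, Real.exp_add]
  congr 1
  field_simp
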